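/- arXiv:1807.04795 — 3 statements merged into one kernel-verified Lean document; each statement's English description precedes it below -/
import Mathlib

section
/- Let E₀, E₃ be C¹ on [0,T], E₁ be C¹ on [0,T]×[−τ,0], E₂ be C¹ on [0,T]×[−τ,0]² with E₂(t,s,r) = E₂(t,r,s), and suppose (E₀,E₁,E₂,E₃) satisfies equations (i)–(iv) of the MFG Riccati system (the boundary conditions at t = T and s = −τ are not needed). Then for every t ∈ [0,T], every a ∈ ℝ and every continuous w : [−τ,0] → ℝ: E₀'(t)·a² − 2a·∫_{−τ}^0 ∂ₜE₁(t,−τ−s)w(s)ds + ∫_{−τ}^0∫_{−τ}^0 ∂ₜE₂(t,−τ−s,−τ−r)w(s)w(r)ds dr + E₃'(t) + σ²E₀(t) − ∫_{−τ}^0 w(s)·(d/ds)[2aE₁(t,−τ−s) − 2∫_{−τ}^0 E₂(t,−τ−s,−τ−r)w(r)dr] ds − 2[(E₀(t)+E₁(t,0))a − ∫_{−τ}^0 (E₁(t,−τ−s)+E₂(t,−τ−s,0))w(s)ds]² + (ε/2)a² = 0. (With a = m₀ − z₀ and w = m₁ − z₁, this identity is the verification that the quadratic ansatz V(t,z₀,z₁)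 = E₀(t)(m₀−z₀)² − 2(m₀−z₀)∫E₁(t,−τ−s)(m₁−z₁)(s)ds + ∬E₂(t,−τ−s,−τ−r)(m₁−z₁)(s)(m₁−z₁)(r)dsdr + E₃(t) solves the mean field game HJB equation and that the same expression solves the master equation.) -/
open Set

/-- The MFG Riccati system (i)–(iv) on [0,T]×[−τ,0], with one-sided (within-set)
derivatives at the boundary, together with the C¹ regularity. -/
def IsMFGRiccati (T τ σ ε : ℝ) (E₀ : ℝ → ℝ) (E₁ : ℝ → ℝ → ℝ)
    (E₂ : ℝ → ℝ → ℝ → ℝ) (E₃ : ℝ → ℝ) : Prop :=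
  ContDiffOn ℝ 1 E₀ (Icc 0 T) ∧
  ContDiffOn ℝ 1 (fun p : ℝ × ℝ => E₁ p.1 p.2) (Icc 0 T ×ˢ Icc (-τ) 0) ∧
  ContDiffOn ℝ 1 (fun p : ℝ × ℝ × ℝ => E₂ p.1 p.2.1 p.2.2)
    (Icc 0 T ×ˢ Icc (-τ) 0 ×ˢ Icc (-τ) 0) ∧
  ContDiffOn ℝ 1 E₃ (Icc 0 T) ∧
  (∀ t ∈ Icc (0:ℝ) T,
    derivWithin E₀ (Icc 0 T) t - 2 * (E₀ t + E₁ t 0)^2 + ε/2 = 0) ∧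
  (∀ t ∈ Icc (0:ℝ) T, ∀ s ∈ Icc (-τ) (0:ℝ),
    derivWithin (fun u => E₁ u s) (Icc 0 T) t
      - derivWithin (fun v => E₁ t v) (Icc (-τ) 0) s
      - 2 * (E₀ t + E₁ t 0) * (E₁ t s + E₂ t s 0) = 0) ∧
  (∀ t ∈ Icc (0:ℝ) T, ∀ s ∈ Icc (-τ) (0:ℝ), ∀ r ∈ Icc (-τ) (0:ℝ),
    derivWithin (fun u => E₂ u s r) (Icc 0 T) t
      - derivWithin (fun v => E₂ t v r) (Icc (-τ) 0) s
      - derivWithin (fun v => E₂ t s v) (Icc (-τ) 0) r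
      - 2 * (E₁ t s + E₂ t s 0) * (E₁ t r + E₂ t r 0) = 0) ∧
  (∀ t ∈ Icc (0:ℝ) T,
    derivWithin E₃ (Icc 0 T) t + σ^2 * E₀ t = 0)


lemma mfg_swap (A B C D : ℝ) (F : ℝ → ℝ → ℝ) (hF : Continuous (Function.uncurry F)) :
    ∫ x in A..B, ∫ y in C..D, F x y = ∫ y in C..D, ∫ x in A..B, F x y := by
  apply MeasureTheory.intervalIntegral_intervalIntegral_swap
  refine MeasureTheory.IntegrableOn.mono_set (t := Set.uIcc A B ×ˢ Set.uIcc C D) ?_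
    (Set.prod_mono Set.uIoc_subset_uIcc Set.uIoc_subset_uIcc)
  exact hF.continuousOn.integrableOn_compact (isCompact_uIcc.prod isCompact_uIcc)

lemma mfg_leibniz (A B : ℝ) (F D : ℝ → ℝ → ℝ)
    (hF : ∀ s ∈ Icc A B, ContinuousOn (F s) (Icc A B))
    (hD : Continuous (Function.uncurry D))
    (hd : ∀ s ∈ Icc A B, ∀ r ∈ Icc A B, HasDerivWithinAt (fun v => F v r) (D s r) (Icc A B) s)
    (s : ℝ) (hs : s ∈ Icc A B) :
    HasDerivWithinAt (fun v => ∫ r in A..B, F v r) (∫ r in A..B, D s r) (Icc A B) s := by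
  have hAB : A ≤ B := hs.1.trans hs.2
  have key : ∀ v ∈ Icc A B, ∫ r in A..B, F v r =
      (∫ r in A..B, F A r) + ∫ x in A..v, ∫ r in A..B, D x r := by
    intro v hv
    rw [mfg_swap A v A B D hD, ← sub_eq_iff_eq_add', ← intervalIntegral.integral_sub]
    · apply intervalIntegral.integral_congr
      intro r hr
      rw [uIcc_of_le hAB] at hr
      symm
      apply intervalIntegral.integral_eq_sub_of_hasDerivAt_of_le hv.1
      · intro x hx
        exact ((hd x ⟨hx.1, hx.2.trans hv.2⟩ r hr).continuousWithinAt).mono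
          (Icc_subset_Icc_right hv.2)
      · intro x hx
        exact (hd x ⟨hx.1.le, hx.2.le.trans hv.2⟩ r hr).hasDerivAt
          (Icc_mem_nhds hx.1 (hx.2.trans_le hv.2))
      · apply Continuous.intervalIntegrable
        fun_prop
    · apply ContinuousOn.intervalIntegrable
      rw [uIcc_of_le hAB]; exact hF v hv
    · apply ContinuousOn.intervalIntegrable
      rw [uIcc_of_le hAB]; exact hF A (left_mem_Icc.2 hAB)
  have hc : Continuous (fun x => ∫ r in A..B, D x r) :=
    intervalIntegral.continuous_parametric_intervalIntegral_of_continuous' hD A B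
  have h1 : HasDerivAt (fun v => (∫ r in A..B, F A r) + ∫ x in A..v, ∫ r in A..B, D x r)
      (∫ r in A..B, D s r) s :=
    (intervalIntegral.integral_hasDerivAt_right (hc.intervalIntegrable _ _)
      hc.stronglyMeasurable.stronglyMeasurableAtFilter hc.continuousAt).const_add _
  exact h1.hasDerivWithinAt.congr key (key s hs)

lemma mfg_algebra (A B a c : ℝ) (g k w : ℝ → ℝ) (D : ℝ → ℝ → ℝ) (hg : Continuous g)
    (hk : Continuous k) (hw : Continuous w) (hD : Continuous (Function.uncurry D)) :
    - 2 * a * (∫ s in A..B, (g s + 2 * c * k s) * w s)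
      + (∫ s in A..B, ∫ r in A..B, (D s r + D r s + 2 * k s * k r) * w s * w r)
      - (∫ s in A..B, w s * (- (2 * a * g s) + 2 * ∫ r in A..B, D s r * w r))
      - 2 * (c * a - ∫ s in A..B, k s * w s) ^ 2 + 2 * c ^ 2 * a ^ 2 = 0 := by
  have hDw : Continuous (Function.uncurry fun s r => D s r * w r) := by
    have := hD
    simp only [Function.uncurry_def] at *
    fun_prop
  have hDww : Continuous (Function.uncurry fun s r => D s r * w s * w r) := by
    have := hD
    simp only [Function.uncurry_def] at *
    fun_prop
  have hDww' : Continuous (Function.uncurry fun s r => D r s * w s * w r) := by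
    have h1 : Continuous fun p : ℝ × ℝ => D p.2 p.1 := hD.comp continuous_swap
    simp only [Function.uncurry_def]
    fun_prop
  have hI : Continuous (fun s => ∫ r in A..B, D s r * w r) :=
    intervalIntegral.continuous_parametric_intervalIntegral_of_continuous' hDw A B
  have hJ : Continuous (fun s => ∫ r in A..B, D s r * w s * w r) :=
    intervalIntegral.continuous_parametric_intervalIntegral_of_continuous' hDww A B
  have hJ' : Continuous (fun s => ∫ r in A..B, D r s * w s * w r) :=
    intervalIntegral.continuous_parametric_intervalIntegral_of_continuous' hDww' A B
  set G := ∫ s in A..B, g s * w s with hG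
  set K := ∫ s in A..B, k s * w s with hK
  set Q := ∫ s in A..B, ∫ r in A..B, D s r * w s * w r with hQ
  have e1 : ∫ s in A..B, (g s + 2 * c * k s) * w s = G + 2 * c * K := by
    rw [hG, hK, ← intervalIntegral.integral_const_mul, ← intervalIntegral.integral_add]
    · congr 1; ext s; ring
    all_goals exact Continuous.intervalIntegrable (by fun_prop) _ _
  have e2 : (∫ s in A..B, w s * (- (2 * a * g s) + 2 * ∫ r in A..B, D s r * w r))
      = - (2 * a) * G + 2 * Q := by
    rw [hG, hQ, ← intervalIntegral.integral_const_mul, ← intervalIntegral.integral_const_mul,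
      ← intervalIntegral.integral_add]
    · congr 1; ext s
      have : ∫ r in A..B, D s r * w s * w r = w s * ∫ r in A..B, D s r * w r := by
        rw [← intervalIntegral.integral_const_mul]
        congr 1; ext r; ring
      rw [this]; ring
    all_goals exact Continuous.intervalIntegrable (by fun_prop) _ _
  have e3 : (∫ s in A..B, ∫ r in A..B, D r s * w s * w r) = Q := by
    rw [mfg_swap _ _ _ _ _ hDww', hQ]
    congr 1; ext s; congr 1; ext r; ring
  have e4 : (∫ s in A..B, ∫ r in A..B, (D s r + D r s + 2 * k s * k r) * w s * w r)
      = 2 * Q + 2 * K ^ 2 := by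
    have : ∀ s, ∫ r in A..B, (D s r + D r s + 2 * k s * k r) * w s * w r
        = (∫ r in A..B, D s r * w s * w r) + (∫ r in A..B, D r s * w s * w r)
          + 2 * K * (k s * w s) := by
      intro s
      have c1 : Continuous fun r => D s r * w s * w r := hDww.comp (Continuous.prodMk_right s)
      have c2 : Continuous fun r => D r s * w s * w r := hDww'.comp (Continuous.prodMk_right s)
      have : 2 * K * (k s * w s) = ∫ r in A..B, 2 * (k s * w s) * (k r * w r) := by
        rw [intervalIntegral.integral_const_mul, ← hK]; ring
      rw [this, ← intervalIntegral.integral_add (c1.intervalIntegrable _ _)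
        (c2.intervalIntegrable _ _), ← intervalIntegral.integral_add]
      · congr 1; ext r; ring
      all_goals exact Continuous.intervalIntegrable (by fun_prop) _ _
    simp_rw [this]
    rw [intervalIntegral.integral_add, intervalIntegral.integral_add, e3,
      intervalIntegral.integral_const_mul, ← hK]
    · ring
    all_goals exact Continuous.intervalIntegrable (by fun_prop) _ _
  rw [e1, e2, e4]
  ring

lemma mfg_partial (τ : ℝ) (hτ : 0 < τ) (f : ℝ → ℝ → ℝ)
    (hf : ContDiffOn ℝ 1 (fun p : ℝ × ℝ => f p.1 p.2) (Icc (-τ) 0 ×ˢ Icc (-τ) 0)) :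
    ContinuousOn (fun p : ℝ × ℝ => derivWithin (fun v => f v p.2) (Icc (-τ) 0) p.1)
      (Icc (-τ) 0 ×ˢ Icc (-τ) 0) ∧
    ∀ s ∈ Icc (-τ) 0, ∀ r ∈ Icc (-τ) 0, HasDerivWithinAt (fun v => f v r)
      (derivWithin (fun v => f v r) (Icc (-τ) 0) s) (Icc (-τ) 0) s := by
  have hu : UniqueDiffOn ℝ (Icc (-τ) 0) := uniqueDiffOn_Icc (by linarith)
  have key : ∀ s ∈ Icc (-τ) 0, ∀ r ∈ Icc (-τ) 0, HasDerivWithinAt (fun v => f v r)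
      (fderivWithin ℝ (fun p : ℝ × ℝ => f p.1 p.2) (Icc (-τ) 0 ×ˢ Icc (-τ) 0) (s, r) (1, 0))
      (Icc (-τ) 0) s := by
    intro s hs r hr
    have h1 := ((hf.differentiableOn one_ne_zero) (s, r) ⟨hs, hr⟩).hasFDerivWithinAt
    have h2 : HasDerivWithinAt (fun v : ℝ => (v, r)) ((1 : ℝ), (0 : ℝ)) (Icc (-τ) 0) s :=
      ((hasDerivAt_id s).prodMk (hasDerivAt_const s r)).hasDerivWithinAt
    have h3 : MapsTo (fun v : ℝ => (v, r)) (Icc (-τ) 0) (Icc (-τ) 0 ×ˢ Icc (-τ) 0) :=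
      fun v hv => ⟨hv, hr⟩
    exact HasFDerivWithinAt.comp_hasDerivWithinAt (f := fun v : ℝ => (v, r)) s h1 h2 h3
  constructor
  · have h3 := (hf.continuousOn_fderivWithin (hu.prod hu) le_rfl).clm_apply
      (continuousOn_const (c := ((1 : ℝ), (0 : ℝ))))
    refine h3.congr ?_
    rintro ⟨s, r⟩ ⟨hs, hr⟩
    exact (key s hs r hr).derivWithin (hu s hs)
  · intro s hs r hr
    exact (key s hs r hr).differentiableWithinAt.hasDerivWithinAt

/- STATEMENT 5: a C¹ symmetric solution of the MFG Riccati system (i)–(iv) makes the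
quadratic ansatz solve the MFG HJB / master equation: the collected-terms identity holds
for every t ∈ [0,T], a ∈ ℝ and continuous w : [−τ,0] → ℝ. -/
theorem mfg_ansatz_verification (T τ σ ε : ℝ)
    (hT : 0 < T) (hτ : 0 < τ) (hτT : τ ≤ T) (hσ : 0 < σ) (hε : 0 < ε)
    (E₀ : ℝ → ℝ) (E₁ : ℝ → ℝ → ℝ) (E₂ : ℝ → ℝ → ℝ → ℝ) (E₃ : ℝ → ℝ)
    (hRic : IsMFGRiccati T τ σ ε E₀ E₁ E₂ E₃)
    (hsym : ∀ t ∈ Icc (0:ℝ) T, ∀ s ∈ Icc (-τ) (0:ℝ), ∀ r ∈ Icc (-τ) (0:ℝ),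
      E₂ t s r = E₂ t r s) :
    ∀ t ∈ Icc (0:ℝ) T, ∀ a : ℝ, ∀ w : ℝ → ℝ, ContinuousOn w (Icc (-τ) 0) →
      derivWithin E₀ (Icc 0 T) t * a^2
        - 2 * a * (∫ s in (-τ)..(0:ℝ),
            derivWithin (fun u => E₁ u (-τ - s)) (Icc 0 T) t * w s)
        + (∫ s in (-τ)..(0:ℝ), ∫ r in (-τ)..(0:ℝ),
            derivWithin (fun u => E₂ u (-τ - s) (-τ - r)) (Icc 0 T) t * w s * w r)
        + derivWithin E₃ (Icc 0 T) t + σ^2 * E₀ t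
        - (∫ s in (-τ)..(0:ℝ), w s *
            derivWithin (fun s' => 2 * a * E₁ t (-τ - s')
              - 2 * ∫ r in (-τ)..(0:ℝ), E₂ t (-τ - s') (-τ - r) * w r)
              (Icc (-τ) 0) s)
        - 2 * ((E₀ t + E₁ t 0) * a
            - ∫ s in (-τ)..(0:ℝ), (E₁ t (-τ - s) + E₂ t (-τ - s) 0) * w s)^2
        + ε/2 * a^2 = 0 := by
  intro t ht a w hw
  obtain ⟨-, h1, h2, -, r0, r1, r2, r3⟩ := hRic
  have hu : UniqueDiffOn ℝ (Icc (-τ) 0) := uniqueDiffOn_Icc (by linarith)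
  have hle : -τ ≤ (0 : ℝ) := by linarith
  have z0 : (0 : ℝ) ∈ Icc (-τ) 0 := ⟨hle, le_rfl⟩
  -- restriction to the time slice
  have h1t : ContDiffOn ℝ 1 (fun v => E₁ t v) (Icc (-τ) 0) :=
    h1.comp (f := fun v : ℝ => (t, v)) (by fun_prop) (fun v hv => ⟨ht, hv⟩)
  have h2t : ContDiffOn ℝ 1 (fun p : ℝ × ℝ => E₂ t p.1 p.2) (Icc (-τ) 0 ×ˢ Icc (-τ) 0) :=
    h2.comp (f := fun p : ℝ × ℝ => (t, p.1, p.2)) (by fun_prop) (fun p hp => ⟨ht, hp.1, hp.2⟩)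
  obtain ⟨cD, dD⟩ := mfg_partial τ hτ (E₂ t) h2t
  have cg : ContinuousOn (derivWithin (fun v => E₁ t v) (Icc (-τ) 0)) (Icc (-τ) 0) :=
    h1t.continuousOn_derivWithin hu le_rfl
  -- reflected projection
  obtain ⟨P, hPc, hPm, hPe⟩ : ∃ P : ℝ → ℝ, Continuous P ∧ (∀ x, P x ∈ Icc (-τ) 0) ∧
      ∀ x ∈ Icc (-τ) 0, P x = x := by
    refine ⟨fun x => max (-τ) (min x 0), by fun_prop, fun x => ⟨le_max_left _ _, ?_⟩, ?_⟩
    · exact max_le hle (min_le_right _ _)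
    · intro x hx
      simp only [min_eq_left hx.2, max_eq_right hx.1]
  have hRm : ∀ x ∈ Icc (-τ) 0, -τ - x ∈ Icc (-τ) 0 := fun x hx =>
    ⟨by linarith [hx.2], by linarith [hx.1]⟩
  have hQm : ∀ x, -τ - P x ∈ Icc (-τ) 0 := fun x => hRm _ (hPm x)
  have hQc : Continuous fun x => -τ - P x := by fun_prop
  have Gc : Continuous fun x => derivWithin (fun v => E₁ t v) (Icc (-τ) 0) (-τ - P x) :=
    cg.comp_continuous hQc hQm
  have Wc : Continuous fun x => w (P x) := hw.comp_continuous hPc hPm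
  have Kc : Continuous fun x => E₁ t (-τ - P x) + E₂ t (-τ - P x) 0 :=
    (h1t.continuousOn.comp_continuous hQc hQm).add
      (h2t.continuousOn.comp_continuous (f := fun x => (-τ - P x, (0 : ℝ))) (by fun_prop)
        (fun x => ⟨hQm x, z0⟩))
  have Dc : Continuous (Function.uncurry fun s r =>
      derivWithin (fun v => E₂ t v (-τ - P r)) (Icc (-τ) 0) (-τ - P s)) :=
    cD.comp_continuous (f := fun p : ℝ × ℝ => (-τ - P p.1, -τ - P p.2)) (by fun_prop)
        (fun p => ⟨hQm _, hQm _⟩)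
  have DWc : Continuous (Function.uncurry fun s r =>
      - derivWithin (fun v => E₂ t v (-τ - P r)) (Icc (-τ) 0) (-τ - P s) * w (P r)) := by
    have h := Wc.comp (continuous_snd (X := ℝ) (Y := ℝ))
    exact Dc.neg.mul h
  have refl : ∀ s, HasDerivWithinAt (fun s' => -τ - s') (-1) (Icc (-τ) 0) s := fun s =>
    ((hasDerivAt_id s).const_sub (-τ)).hasDerivWithinAt
  have alg := mfg_algebra (-τ) 0 a (E₀ t + E₁ t 0) _ _ _ _ Gc Kc Wc Dc
  -- symmetric partial derivative
  have hsymD : ∀ s ∈ Icc (-τ) 0, ∀ r ∈ Icc (-τ) 0,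
      derivWithin (fun v => E₂ t s v) (Icc (-τ) 0) r
        = derivWithin (fun v => E₂ t v s) (Icc (-τ) 0) r := by
    intro s hs r hr
    exact derivWithin_congr (fun v hv => hsym t ht s hs v hv) (hsym t ht s hs r hr)
  have e1 : (∫ s in (-τ)..(0:ℝ), derivWithin (fun u => E₁ u (-τ - s)) (Icc 0 T) t * w s)
      = ∫ s in (-τ)..(0:ℝ), (derivWithin (fun v => E₁ t v) (Icc (-τ) 0) (-τ - P s)
        + 2 * (E₀ t + E₁ t 0) * (E₁ t (-τ - P s) + E₂ t (-τ - P s) 0)) * w (P s) := by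
    apply intervalIntegral.integral_congr
    intro s hs
    rw [uIcc_of_le hle] at hs
    have := r1 t ht (-τ - s) (hRm s hs)
    simp only [hPe s hs]
    congr 1
    linarith
  have e2 : (∫ s in (-τ)..(0:ℝ), ∫ r in (-τ)..(0:ℝ),
            derivWithin (fun u => E₂ u (-τ - s) (-τ - r)) (Icc 0 T) t * w s * w r)
      = ∫ s in (-τ)..(0:ℝ), ∫ r in (-τ)..(0:ℝ),
        (derivWithin (fun v => E₂ t v (-τ - P r)) (Icc (-τ) 0) (-τ - P s)
        + derivWithin (fun v => E₂ t v (-τ - P s)) (Icc (-τ) 0) (-τ - P r)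
        + 2 * (E₁ t (-τ - P s) + E₂ t (-τ - P s) 0) * (E₁ t (-τ - P r) + E₂ t (-τ - P r) 0))
          * w (P s) * w (P r) := by
    apply intervalIntegral.integral_congr
    intro s hs
    apply intervalIntegral.integral_congr
    intro r hr
    rw [uIcc_of_le hle] at hs hr
    have := r2 t ht (-τ - s) (hRm s hs) (-τ - r) (hRm r hr)
    rw [hsymD _ (hRm s hs) _ (hRm r hr)] at this
    simp only [hPe s hs, hPe r hr]
    congr 2
    linarith
  have e3 : (∫ s in (-τ)..(0:ℝ), w s *
            derivWithin (fun s' => 2 * a * E₁ t (-τ - s')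
              - 2 * ∫ r in (-τ)..(0:ℝ), E₂ t (-τ - s') (-τ - r) * w r)
              (Icc (-τ) 0) s)
      = ∫ s in (-τ)..(0:ℝ), w (P s) *
        (- (2 * a * derivWithin (fun v => E₁ t v) (Icc (-τ) 0) (-τ - P s))
          + 2 * ∫ r in (-τ)..(0:ℝ),
            derivWithin (fun v => E₂ t v (-τ - P r)) (Icc (-τ) 0) (-τ - P s) * w (P r)) := by
    apply intervalIntegral.integral_congr
    intro s hs
    rw [uIcc_of_le hle] at hs
    have hL := mfg_leibniz (-τ) 0 (fun s' r => E₂ t (-τ - s') (-τ - r) * w r) _ (by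
        intro v hv
        refine ContinuousOn.mul ?_ hw
        exact h2t.continuousOn.comp (f := fun r => (-τ - v, -τ - r)) (by fun_prop)
          (fun r hr => ⟨hRm v hv, hRm r hr⟩)) DWc (by
        intro v hv r hr
        simp only [hPe v hv, hPe r hr]
        have := ((dD _ (hRm v hv) _ (hRm r hr)).comp v (refl v) hRm).mul_const (w r)
        refine this.congr_deriv ?_
        ring) s hs
    have hG := (((h1t.differentiableOn one_ne_zero) _ (hRm s hs)).hasDerivWithinAt.comp s
      (refl s) hRm).const_mul (2 * a)
    have hT := (hG.sub (hL.const_mul 2)).derivWithin (hu s hs)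
    have hneg : ∀ s, (∫ r in (-τ)..(0:ℝ),
        - derivWithin (fun v => E₂ t v (-τ - P r)) (Icc (-τ) 0) (-τ - P s) * w (P r))
        = - ∫ r in (-τ)..(0:ℝ),
          derivWithin (fun v => E₂ t v (-τ - P r)) (Icc (-τ) 0) (-τ - P s) * w (P r) := by
      intro s
      rw [← intervalIntegral.integral_neg]
      congr 1; ext r; ring
    rw [hneg] at hT
    show w s * _ = w (P s) * _
    refine congrArg₂ _ (by rw [hPe s hs]) (Eq.trans hT ?_)
    rw [hPe s hs]
    ring
  have e4 : (∫ s in (-τ)..(0:ℝ), (E₁ t (-τ - s) + E₂ t (-τ - s) 0) * w s)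
      = ∫ s in (-τ)..(0:ℝ), (E₁ t (-τ - P s) + E₂ t (-τ - P s) 0) * w (P s) := by
    apply intervalIntegral.integral_congr
    intro s hs
    rw [uIcc_of_le hle] at hs
    simp only [hPe s hs]
  rw [e1, e2, e3, e4]
  have q0 := r0 t ht
  have q3 := r3 t ht
  linear_combination alg + q3 + a ^ 2 * q0
end

section
/- Let E₀, E₃ be C¹ on [0,T], E₁ be C¹ on [0,T]×[−τ,0], and E₂ be C¹ on [0,T]×[−τ,0]² with E₂(t,s,r) = E₂(t,r,s). Suppose that for every t ∈ [0,T], every a ∈ ℝ and every continuous w : [−τ,0] → ℝ the identity E₀'(t)·a² − 2a·∫_{−τ}^0 ∂ₜE₁(t,−τ−s)w(s)ds + ∫_{−τ}^0∫_{−τ}^0 ∂ₜE₂(t,−τ−s,−τ−r)w(s)w(r)ds dr + E₃'(t) + σ²E₀(t) − ∫_{−τ}^0 w(s)·(d/ds)[2aE₁(t,−τ−s) − 2∫_{−τ}^0 E₂(t,−τ−s,−τ−r)w(r)dr] ds − 2[(E₀(t)+E₁(t,0))a − ∫_{−τ}^0 (E₁(t,−τ−s)+E₂(t,−τ−s,0))w(s)ds]²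 + (ε/2)a² = 0 holds. Then (E₀,E₁,E₂,E₃) satisfies, at every point of its domain, the four equations (i) E₀'(t) − 2(E₀(t)+E₁(t,0))² + ε/2 = 0; (ii) ∂ₜE₁(t,s) − ∂ₛE₁(t,s) − 2(E₀(t)+E₁(t,0))(E₁(t,s)+E₂(t,s,0)) = 0; (iii) ∂ₜE₂(t,s,r) − ∂ₛE₂(t,s,r) − ∂ᵣE₂(t,s,r) − 2(E₁(t,s)+E₂(t,s,0))(E₁(t,r)+E₂(t,r,0)) = 0; (iv) E₃'(t) + σ²E₀(t) = 0. (This is the 'collecting terms' step: vanishing of the coefficients of a², a·w, the quadratic form in w, and the constant term forces the Riccati system.) -/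
open Set

lemma ct_swap (a b c d : ℝ) (F : ℝ → ℝ → ℝ) (hF : Continuous (Function.uncurry F)) :
    ∫ x in a..b, ∫ y in c..d, F x y = ∫ y in c..d, ∫ x in a..b, F x y := by
  apply MeasureTheory.intervalIntegral_intervalIntegral_swap
  have h : MeasureTheory.IntegrableOn (Function.uncurry F) (uIcc a b ×ˢ uIcc c d) :=
    hF.continuousOn.integrableOn_compact (isCompact_uIcc.prod isCompact_uIcc)
  exact h.mono_set (prod_mono uIoc_subset_uIcc uIoc_subset_uIcc)

lemma ct_param (a b : ℝ) (F : ℝ → ℝ → ℝ) (hF : Continuous (Function.uncurry F)) :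
    Continuous (fun x => ∫ y in a..b, F x y) :=
  intervalIntegral.continuous_parametric_intervalIntegral_of_continuous' hF a b

lemma ct_vanish {a b : ℝ} (hab : a < b) (f : ℝ → ℝ) (hf : Continuous f)
    (h : ∀ w : ℝ → ℝ, Continuous w → ∫ s in a..b, f s * w s = 0) :
    ∀ s ∈ Icc a b, f s = 0 := by
  intro s hs
  by_contra hne
  have h2 : 0 < ∫ s in a..b, f s * f s :=
    intervalIntegral.integral_pos hab (hf.mul hf).continuousOn
      (fun x _ => mul_self_nonneg _) ⟨s, hs, mul_self_pos.mpr hne⟩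
  exact h2.ne' (h f hf)

lemma ct_diff {a b : ℝ} (hab : a < b) (f g : ℝ → ℝ → ℝ) (w : ℝ → ℝ) (hw : Continuous w)
    (hg : Continuous (Function.uncurry g))
    (hf : ∀ s ∈ Icc a b, ∀ r ∈ Icc a b, HasDerivWithinAt (fun x => f x r) (g s r) (Icc a b) s)
    (hc : ContinuousOn (f a) (Icc a b)) :
    ∀ s ∈ Icc a b, HasDerivWithinAt (fun x => ∫ r in a..b, f x r * w r)
      (∫ r in a..b, g s r * w r) (Icc a b) s := by
  have hG : Continuous (fun x => ∫ r in a..b, g x r * w r) := by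
    apply ct_param
    exact hg.mul (hw.comp continuous_snd)
  have key : ∀ x ∈ Icc a b, ∫ r in a..b, f x r * w r =
      (∫ r in a..b, f a r * w r) + ∫ y in a..x, ∫ r in a..b, g y r * w r := by
    intro x hx
    rw [ct_swap _ _ _ _ (fun y r => g y r * w r) (hg.mul (hw.comp continuous_snd))]
    have hi : Continuous (fun r => ∫ y in a..x, g y r * w r) := by
      apply ct_param a x (fun r y => g y r * w r)
      exact (hg.comp continuous_swap).mul (hw.comp continuous_fst)
    rw [← intervalIntegral.integral_add _ (hi.intervalIntegrable _ _)]
    · apply intervalIntegral.integral_congr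
      intro r hr
      rw [uIcc_of_le hab.le] at hr
      have hgr : Continuous (fun y => g y r) := hg.comp (by fun_prop : Continuous fun y : ℝ => (y, r))
      have h1 : ∫ y in a..x, g y r = f x r - f a r := by
        apply intervalIntegral.integral_eq_sub_of_hasDerivAt_of_le (f := fun x => f x r) hx.1
        · intro y hy
          exact ((hf y ⟨hy.1, hy.2.trans hx.2⟩ r hr).continuousWithinAt).mono
            (Icc_subset_Icc_right hx.2)
        · intro y hy
          have hy' : y ∈ Ioo a b := ⟨hy.1, hy.2.trans_le hx.2⟩
          exact (hf y (Ioo_subset_Icc_self hy') r hr).hasDerivAt (Icc_mem_nhds hy'.1 hy'.2)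
        · exact hgr.intervalIntegrable _ _
      simp only [intervalIntegral.integral_mul_const, h1]
      ring
    · apply ContinuousOn.intervalIntegrable
      rw [uIcc_of_le hab.le]
      exact hc.mul hw.continuousOn
  intro s hs
  have h3 : HasDerivAt (fun x => (∫ r in a..b, f a r * w r) + ∫ y in a..x, ∫ r in a..b, g y r * w r)
      (∫ r in a..b, g s r * w r) s :=
    ((hG.integral_hasStrictDerivAt a s).hasDerivAt).const_add _
  exact h3.hasDerivWithinAt.congr key (key s hs)

lemma ct_quad {a b : ℝ} (hab : a < b) (M : ℝ → ℝ → ℝ) (hM : Continuous (Function.uncurry M))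
    (h : ∀ w : ℝ → ℝ, Continuous w → ∫ s in a..b, w s * ∫ r in a..b, M s r * w r = 0) :
    ∀ s ∈ Icc a b, ∀ r ∈ Icc a b, M s r + M r s = 0 := by
  have hMt : Continuous (Function.uncurry fun s r => M r s) := hM.comp continuous_swap
  have hMs : ∀ s, Continuous (M s) := fun s => hM.comp (by fun_prop : Continuous fun y : ℝ => (s, y))
  have hMs' : ∀ s, Continuous (fun r => M r s) :=
    fun s => hM.comp (by fun_prop : Continuous fun y : ℝ => (y, s))
  have hP : ∀ v : ℝ → ℝ, Continuous v → Continuous (fun s => ∫ r in a..b, M s r * v r) := by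
    intro v hv
    apply ct_param
    exact hM.mul (hv.comp continuous_snd)
  have hP' : ∀ v : ℝ → ℝ, Continuous v → Continuous (fun s => ∫ r in a..b, M r s * v r) := by
    intro v hv
    apply ct_param
    exact hMt.mul (hv.comp continuous_snd)
  have hsw : ∀ u v : ℝ → ℝ, Continuous u → Continuous v →
      ∫ s in a..b, v s * ∫ r in a..b, M s r * u r = ∫ s in a..b, u s * ∫ r in a..b, M r s * v r := by
    intro u v hu hv
    simp only [← intervalIntegral.integral_const_mul]
    rw [ct_swap a b a b (fun s r => v s * (M s r * u r))]
    · congr 1; ext s; congr 1; ext r; ring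
    · exact (hv.comp continuous_fst).mul (hM.mul (hu.comp continuous_snd))
  have hpol : ∀ u v : ℝ → ℝ, Continuous u → Continuous v →
      ∫ s in a..b, (∫ r in a..b, (M s r + M r s) * v r) * u s = 0 := by
    intro u v hu hv
    have e1 := h (fun s => u s + v s) (hu.add hv)
    have e2 := h u hu
    have e3 := h v hv
    have e4 := hsw u v hu hv
    have i1 := (hu.fun_mul (hP u hu)).intervalIntegrable (μ := MeasureTheory.volume) a b
    have i2 := (hu.fun_mul (hP v hv)).intervalIntegrable (μ := MeasureTheory.volume) a b
    have i3 := (hv.fun_mul (hP u hu)).intervalIntegrable (μ := MeasureTheory.volume) a b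
    have i4 := (hv.fun_mul (hP v hv)).intervalIntegrable (μ := MeasureTheory.volume) a b
    have i5 := (hu.fun_mul (hP' v hv)).intervalIntegrable (μ := MeasureTheory.volume) a b
    have e5 : ∀ s, (u s + v s) * ∫ r in a..b, M s r * (u r + v r) =
        (u s * (∫ r in a..b, M s r * u r) + u s * (∫ r in a..b, M s r * v r))
        + (v s * (∫ r in a..b, M s r * u r) + v s * (∫ r in a..b, M s r * v r)) := by
      intro s
      have : ∫ r in a..b, M s r * (u r + v r) =
          (∫ r in a..b, M s r * u r) + ∫ r in a..b, M s r * v r := by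
        rw [← intervalIntegral.integral_add
          (((hMs s).fun_mul hu).intervalIntegrable _ _) (((hMs s).fun_mul hv).intervalIntegrable _ _)]
        congr 1; ext r; ring
      rw [this]; ring
    simp only [e5] at e1
    rw [intervalIntegral.integral_add (i1.add i2) (i3.add i4), intervalIntegral.integral_add i1 i2,
      intervalIntegral.integral_add i3 i4] at e1
    have e6 : ∀ s, (∫ r in a..b, (M s r + M r s) * v r) * u s =
        u s * (∫ r in a..b, M s r * v r) + u s * ∫ r in a..b, M r s * v r := by
      intro s
      have : ∫ r in a..b, (M s r + M r s) * v r =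
          (∫ r in a..b, M s r * v r) + ∫ r in a..b, M r s * v r := by
        rw [← intervalIntegral.integral_add
          (((hMs s).fun_mul hv).intervalIntegrable _ _) (((hMs' s).fun_mul hv).intervalIntegrable _ _)]
        congr 1; ext r; ring
      rw [this]; ring
    simp only [e6]
    rw [intervalIntegral.integral_add i2 i5]
    linarith
  intro s hs
  apply ct_vanish hab (fun r => M s r + M r s) ((hMs s).add (hMs' s))
  intro v hv
  apply ct_vanish hab (fun s => ∫ r in a..b, (M s r + M r s) * v r) _ _ s hs
  · apply ct_param
    exact (hM.add hMt).mul (hv.comp continuous_snd)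
  · intro u hu
    exact hpol u v hu hv

lemma ct_core {a b : ℝ} (hab : a < b) (c0 c3 k e : ℝ) (A B G : ℝ → ℝ) (K D : ℝ → ℝ → ℝ)
    (hA : Continuous A) (hB : Continuous B) (hG : Continuous G)
    (hK : Continuous (Function.uncurry K)) (hD : Continuous (Function.uncurry D))
    (hsym : ∀ s r, K s r = K r s)
    (h : ∀ x : ℝ, ∀ w : ℝ → ℝ, Continuous w →
      c0 * x^2 - 2 * x * (∫ s in a..b, A s * w s)
      + (∫ s in a..b, ∫ r in a..b, K s r * w s * w r) + c3
      - (∫ s in a..b, w s * (2 * x * B s - 2 * ∫ r in a..b, D s r * w r))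
      - 2 * (k * x - ∫ s in a..b, G s * w s)^2 + e * x^2 = 0) :
    c0 - 2 * k^2 + e = 0 ∧ (∀ s ∈ Icc a b, A s + B s - 2 * k * G s = 0) ∧
    (∀ s ∈ Icc a b, ∀ r ∈ Icc a b, K s r + D s r + D r s - 2 * G s * G r = 0) ∧ c3 = 0 := by
  have hc3 : c3 = 0 := by
    have := h 0 (fun _ => 0) continuous_const
    simpa using this
  have hc0 : c0 - 2 * k^2 + e = 0 := by
    have := h 1 (fun _ => 0) continuous_const
    simp [hc3] at this
    linarith
  have hKs : ∀ s, Continuous (K s) := fun s => hK.comp (by fun_prop : Continuous fun y : ℝ => (s, y))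
  have hDs : ∀ s, Continuous (D s) := fun s => hD.comp (by fun_prop : Continuous fun y : ℝ => (s, y))
  have hDP : ∀ v : ℝ → ℝ, Continuous v → Continuous (fun s => ∫ r in a..b, D s r * v r) := by
    intro v hv
    apply ct_param
    exact hD.mul (hv.comp continuous_snd)
  have hKP : ∀ v : ℝ → ℝ, Continuous v → Continuous (fun s => ∫ r in a..b, K s r * v r) := by
    intro v hv
    apply ct_param
    exact hK.mul (hv.comp continuous_snd)
  have hsplit : ∀ x : ℝ, ∀ w : ℝ → ℝ, Continuous w →
      (∫ s in a..b, w s * (2 * x * B s - 2 * ∫ r in a..b, D s r * w r)) =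
      2 * x * (∫ s in a..b, B s * w s) - 2 * ∫ s in a..b, w s * ∫ r in a..b, D s r * w r := by
    intro x w hw
    rw [← intervalIntegral.integral_const_mul, ← intervalIntegral.integral_const_mul,
      ← intervalIntegral.integral_sub]
    · congr 1; ext s; ring
    · exact (continuous_const.mul (hB.mul hw)).intervalIntegrable _ _
    · exact (continuous_const.mul (hw.mul (hDP w hw))).intervalIntegrable _ _
  refine ⟨hc0, ?_, ?_, hc3⟩
  · apply ct_vanish hab (fun s => A s + B s - 2 * k * G s) (by fun_prop)
    intro w hw
    have h1 := h 1 w hw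
    have h2 := h (-1) w hw
    rw [hsplit _ _ hw] at h1 h2
    have : ∫ s in a..b, (A s + B s - 2 * k * G s) * w s =
        (∫ s in a..b, A s * w s) + (∫ s in a..b, B s * w s) - 2 * k * ∫ s in a..b, G s * w s := by
      rw [← intervalIntegral.integral_const_mul, ← intervalIntegral.integral_add,
        ← intervalIntegral.integral_sub]
      · congr 1; ext s; ring
      all_goals (apply Continuous.intervalIntegrable; fun_prop)
    rw [this]
    nlinarith
  · intro s hs r hr
    have := ct_quad hab (fun s r => K s r + 2 * D s r - 2 * G s * G r)
      (by
        have h1 : Continuous fun p : ℝ × ℝ => K p.1 p.2 := hK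
        have h2 : Continuous fun p : ℝ × ℝ => D p.1 p.2 := hD
        show Continuous fun p : ℝ × ℝ => K p.1 p.2 + 2 * D p.1 p.2 - 2 * G p.1 * G p.2
        fun_prop) ?_ s hs r hr
    · have h5 := hsym s r
      linarith
    · intro w hw
      have h1 := h 0 w hw
      rw [hsplit _ _ hw] at h1
      have e1 : ∀ s, w s * ∫ r in a..b, (K s r + 2 * D s r - 2 * G s * G r) * w r =
          w s * (∫ r in a..b, K s r * w r) + 2 * (w s * ∫ r in a..b, D s r * w r)
            - (2 * ∫ r in a..b, G r * w r) * (G s * w s) := by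
        intro s
        have : ∫ r in a..b, (K s r + 2 * D s r - 2 * G s * G r) * w r =
            (∫ r in a..b, K s r * w r) + 2 * (∫ r in a..b, D s r * w r)
            - (2 * G s) * (∫ r in a..b, G r * w r) := by
          rw [← intervalIntegral.integral_const_mul, ← intervalIntegral.integral_const_mul,
            ← intervalIntegral.integral_add, ← intervalIntegral.integral_sub]
          · congr 1; ext s; ring
          all_goals
            have := hKs s
            have := hDs s
            apply Continuous.intervalIntegrable
            fun_prop
        rw [this]; ring
      have e2 : ∀ s, ∫ r in a..b, K s r * w s * w r = w s * ∫ r in a..b, K s r * w r := by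
        intro s
        rw [← intervalIntegral.integral_const_mul]
        congr 1; ext r; ring
      simp only [e2] at h1
      simp only [e1]
      have q1 := hKP w hw
      have q2 := hDP w hw
      rw [intervalIntegral.integral_sub, intervalIntegral.integral_add,
        intervalIntegral.integral_const_mul, intervalIntegral.integral_const_mul]
      · rw [hc3] at h1
        linear_combination h1
      all_goals
        apply Continuous.intervalIntegrable
        fun_prop

lemma ct_fixed (T τ σ ε : ℝ) (hT : 0 < T) (hτ : 0 < τ)
    (E₀ : ℝ → ℝ) (E₁ : ℝ → ℝ → ℝ) (E₂ : ℝ → ℝ → ℝ → ℝ) (E₃ : ℝ → ℝ)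
    (hE₁ : ContDiffOn ℝ 1 (fun p : ℝ × ℝ => E₁ p.1 p.2) (Icc 0 T ×ˢ Icc (-τ) 0))
    (hE₂ : ContDiffOn ℝ 1 (fun p : ℝ × ℝ × ℝ => E₂ p.1 p.2.1 p.2.2)
      (Icc 0 T ×ˢ Icc (-τ) 0 ×ˢ Icc (-τ) 0))
    (hsym : ∀ t ∈ Icc (0:ℝ) T, ∀ s ∈ Icc (-τ) (0:ℝ), ∀ r ∈ Icc (-τ) (0:ℝ),
      E₂ t s r = E₂ t r s) (t : ℝ) (ht : t ∈ Icc (0:ℝ) T)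
    (hid : ∀ a : ℝ, ∀ w : ℝ → ℝ, ContinuousOn w (Icc (-τ) 0) →
      derivWithin E₀ (Icc 0 T) t * a^2
        - 2 * a * (∫ s in (-τ)..(0:ℝ),
            derivWithin (fun u => E₁ u (-τ - s)) (Icc 0 T) t * w s)
        + (∫ s in (-τ)..(0:ℝ), ∫ r in (-τ)..(0:ℝ),
            derivWithin (fun u => E₂ u (-τ - s) (-τ - r)) (Icc 0 T) t * w s * w r)
        + derivWithin E₃ (Icc 0 T) t + σ^2 * E₀ t
        - (∫ s in (-τ)..(0:ℝ), w s *
            derivWithin (fun s' => 2 * a * E₁ t (-τ - s')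
              - 2 * ∫ r in (-τ)..(0:ℝ), E₂ t (-τ - s') (-τ - r) * w r)
              (Icc (-τ) 0) s)
        - 2 * ((E₀ t + E₁ t 0) * a
            - ∫ s in (-τ)..(0:ℝ), (E₁ t (-τ - s) + E₂ t (-τ - s) 0) * w s)^2
        + ε/2 * a^2 = 0) :
    (derivWithin E₀ (Icc 0 T) t - 2 * (E₀ t + E₁ t 0)^2 + ε/2 = 0) ∧
    (∀ s ∈ Icc (-τ) (0:ℝ),
      derivWithin (fun u => E₁ u s) (Icc 0 T) t
        - derivWithin (fun v => E₁ t v) (Icc (-τ) 0) s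
        - 2 * (E₀ t + E₁ t 0) * (E₁ t s + E₂ t s 0) = 0) ∧
    (∀ s ∈ Icc (-τ) (0:ℝ), ∀ r ∈ Icc (-τ) (0:ℝ),
      derivWithin (fun u => E₂ u s r) (Icc 0 T) t
        - derivWithin (fun v => E₂ t v r) (Icc (-τ) 0) s
        - derivWithin (fun v => E₂ t s v) (Icc (-τ) 0) r
        - 2 * (E₁ t s + E₂ t s 0) * (E₁ t r + E₂ t r 0) = 0) ∧
    (derivWithin E₃ (Icc 0 T) t + σ^2 * E₀ t = 0) := by
  have hτ0 : -τ < 0 := by linarith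
  have uT : UniqueDiffOn ℝ (Icc (0:ℝ) T) := uniqueDiffOn_Icc hT
  have uI : UniqueDiffOn ℝ (Icc (-τ) (0:ℝ)) := uniqueDiffOn_Icc hτ0
  obtain ⟨L1, hL1⟩ : ∃ L, L = fderivWithin ℝ (fun p : ℝ × ℝ => E₁ p.1 p.2)
    (Icc 0 T ×ˢ Icc (-τ) 0) := ⟨_, rfl⟩
  obtain ⟨L2, hL2⟩ : ∃ L, L = fderivWithin ℝ (fun p : ℝ × ℝ × ℝ => E₂ p.1 p.2.1 p.2.2)
    (Icc 0 T ×ˢ Icc (-τ) 0 ×ˢ Icc (-τ) 0) := ⟨_, rfl⟩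
  have cL1 : ContinuousOn L1 (Icc 0 T ×ˢ Icc (-τ) 0) := by
    rw [hL1]; exact hE₁.continuousOn_fderivWithin (uT.prod uI) le_rfl
  have cL2 : ContinuousOn L2 (Icc 0 T ×ˢ Icc (-τ) 0 ×ˢ Icc (-τ) 0) := by
    rw [hL2]; exact hE₂.continuousOn_fderivWithin (uT.prod (uI.prod uI)) le_rfl
  have fd1 : ∀ s ∈ Icc (-τ) (0:ℝ), HasFDerivWithinAt (fun p : ℝ × ℝ => E₁ p.1 p.2) (L1 (t, s))
      (Icc 0 T ×ˢ Icc (-τ) 0) (t, s) := by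
    intro s hs
    rw [hL1]
    exact (hE₁.differentiableOn one_ne_zero (t, s) ⟨ht, hs⟩).hasFDerivWithinAt
  have fd2 : ∀ s ∈ Icc (-τ) (0:ℝ), ∀ r ∈ Icc (-τ) (0:ℝ),
      HasFDerivWithinAt (fun p : ℝ × ℝ × ℝ => E₂ p.1 p.2.1 p.2.2) (L2 (t, s, r))
      (Icc 0 T ×ˢ Icc (-τ) 0 ×ˢ Icc (-τ) 0) (t, s, r) := by
    intro s hs r hr
    rw [hL2]
    exact (hE₂.differentiableOn one_ne_zero (t, s, r) ⟨ht, hs, hr⟩).hasFDerivWithinAt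
  have refl : ∀ s ∈ Icc (-τ) (0:ℝ), -τ - s ∈ Icc (-τ) (0:ℝ) := fun s hs =>
    ⟨by linarith [hs.2], by linarith [hs.1]⟩
  -- partial derivatives
  have d1t : ∀ s ∈ Icc (-τ) (0:ℝ),
      HasDerivWithinAt (fun u => E₁ u s) (L1 (t, s) (1, 0)) (Icc 0 T) t := by
    intro s hs
    exact (fd1 s hs).comp_hasDerivWithinAt (f := fun u => (u, s)) t
      ((hasDerivWithinAt_id t _).prodMk (hasDerivWithinAt_const t _ s)) (fun u hu => ⟨hu, hs⟩)
  have d1s : ∀ s ∈ Icc (-τ) (0:ℝ),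
      HasDerivWithinAt (fun v => E₁ t v) (L1 (t, s) (0, 1)) (Icc (-τ) 0) s := by
    intro s hs
    exact (fd1 s hs).comp_hasDerivWithinAt (f := fun v => (t, v)) s
      ((hasDerivWithinAt_const s _ t).prodMk (hasDerivWithinAt_id s _)) (fun u hu => ⟨ht, hu⟩)
  have d2t : ∀ s ∈ Icc (-τ) (0:ℝ), ∀ r ∈ Icc (-τ) (0:ℝ),
      HasDerivWithinAt (fun u => E₂ u s r) (L2 (t, s, r) (1, 0, 0)) (Icc 0 T) t := by
    intro s hs r hr
    exact (fd2 s hs r hr).comp_hasDerivWithinAt (f := fun u => (u, s, r)) t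
      ((hasDerivWithinAt_id t _).prodMk (hasDerivWithinAt_const t _ (s, r)))
      (fun u hu => ⟨hu, hs, hr⟩)
  have d2s : ∀ s ∈ Icc (-τ) (0:ℝ), ∀ r ∈ Icc (-τ) (0:ℝ),
      HasDerivWithinAt (fun v => E₂ t v r) (L2 (t, s, r) (0, 1, 0)) (Icc (-τ) 0) s := by
    intro s hs r hr
    exact (fd2 s hs r hr).comp_hasDerivWithinAt (f := fun v => (t, v, r)) s
      ((hasDerivWithinAt_const s _ t).prodMk
        ((hasDerivWithinAt_id s _).prodMk (hasDerivWithinAt_const s _ r)))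
      (fun u hu => ⟨ht, hu, hr⟩)
  have drefl : ∀ s, HasDerivWithinAt (fun x : ℝ => -τ - x) (-1) (Icc (-τ) 0) s := by
    intro s
    simpa using (hasDerivWithinAt_id s (Icc (-τ) 0)).const_sub (-τ)
  have d1s' : ∀ s ∈ Icc (-τ) (0:ℝ),
      HasDerivWithinAt (fun v => E₁ t (-τ - v)) (-(L1 (t, -τ - s) (0, 1))) (Icc (-τ) 0) s := by
    intro s hs
    have := (d1s _ (refl s hs)).comp s (drefl s) refl
    rw [mul_neg_one] at this
    exact this
  have d2s' : ∀ s ∈ Icc (-τ) (0:ℝ), ∀ r ∈ Icc (-τ) (0:ℝ),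
      HasDerivWithinAt (fun v => E₂ t (-τ - v) (-τ - r))
        (-(L2 (t, -τ - s, -τ - r) (0, 1, 0))) (Icc (-τ) 0) s := by
    intro s hs r hr
    have := (d2s _ (refl s hs) _ (refl r hr)).comp s (drefl s) refl
    rw [mul_neg_one] at this
    exact this
  have d2r : ∀ s ∈ Icc (-τ) (0:ℝ), ∀ r ∈ Icc (-τ) (0:ℝ),
      HasDerivWithinAt (fun v => E₂ t s v) (L2 (t, r, s) (0, 1, 0)) (Icc (-τ) 0) r := by
    intro s hs r hr
    exact (d2s r hr s hs).congr (fun v hv => hsym t ht s hs v hv) (hsym t ht s hs r hr)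
  have hKs : ∀ s ∈ Icc (-τ) (0:ℝ), ∀ r ∈ Icc (-τ) (0:ℝ),
      L2 (t, s, r) (1, 0, 0) = L2 (t, r, s) (1, 0, 0) := by
    intro s hs r hr
    rw [← (d2t s hs r hr).derivWithin (uT t ht), ← (d2t r hr s hs).derivWithin (uT t ht)]
    exact derivWithin_congr (fun u hu => hsym u hu s hs r hr) (hsym t ht s hs r hr)
  -- clamped reflection
  obtain ⟨q, hqc, hqm, hqe⟩ : ∃ q : ℝ → ℝ, Continuous q ∧ (∀ s, q s ∈ Icc (-τ) (0:ℝ)) ∧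
      ∀ s ∈ Icc (-τ) (0:ℝ), q s = -τ - s := by
    refine ⟨fun s => -τ - max (-τ) (min s 0), by fun_prop, fun s => refl _
      ⟨le_max_left _ _, max_le hτ0.le (min_le_right _ _)⟩, fun s hs => ?_⟩
    simp only [min_eq_left hs.2, max_eq_right hs.1]
  have h0 : (0:ℝ) ∈ Icc (-τ) (0:ℝ) := ⟨hτ0.le, le_rfl⟩
  have c1 : Continuous fun s => L1 (t, q s) :=
    cL1.comp_continuous (by fun_prop) (fun s => ⟨ht, hqm s⟩)
  have c2 : Continuous fun p : ℝ × ℝ => L2 (t, q p.1, q p.2) :=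
    cL2.comp_continuous (by fun_prop) (fun s => ⟨ht, hqm _, hqm _⟩)
  have cG : Continuous fun s => E₁ t (q s) + E₂ t (q s) 0 := by
    apply Continuous.add
    · exact hE₁.continuousOn.comp_continuous (f := fun s => (t, q s)) (by fun_prop)
        (fun s => ⟨ht, hqm s⟩)
    · exact hE₂.continuousOn.comp_continuous (f := fun s => (t, q s, (0:ℝ))) (by fun_prop)
        (fun s => ⟨ht, hqm s, h0⟩)
  have cD : Continuous (Function.uncurry fun s r => -(L2 (t, q s, q r) (0, 1, 0))) :=
    (c2.clm_apply continuous_const).neg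
  have ic : ∀ f g : ℝ → ℝ, (∀ s ∈ Icc (-τ) (0:ℝ), f s = g s) →
      ∫ s in (-τ)..(0:ℝ), f s = ∫ s in (-τ)..(0:ℝ), g s := by
    intro f g h
    apply intervalIntegral.integral_congr
    rw [uIcc_of_le hτ0.le]
    exact h
  obtain ⟨r1, r2, r3, r4⟩ := ct_core hτ0 (derivWithin E₀ (Icc 0 T) t)
    (derivWithin E₃ (Icc 0 T) t + σ^2 * E₀ t) (E₀ t + E₁ t 0) (ε / 2)
    (fun s => L1 (t, q s) (1, 0)) (fun s => -(L1 (t, q s) (0, 1)))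
    (fun s => E₁ t (q s) + E₂ t (q s) 0) (fun s r => L2 (t, q s, q r) (1, 0, 0))
    (fun s r => -(L2 (t, q s, q r) (0, 1, 0)))
    (c1.clm_apply continuous_const) (c1.clm_apply continuous_const).neg cG
    (c2.clm_apply continuous_const) cD
    (fun s r => hKs _ (hqm s) _ (hqm r)) (by
      intro x w hw
      have h1 := hid x w hw.continuousOn
      rw [ic (fun s => derivWithin (fun u => E₁ u (-τ - s)) (Icc 0 T) t * w s)
        (fun s => L1 (t, q s) (1, 0) * w s)
        (fun s hs => by simp only [hqe s hs, (d1t _ (refl s hs)).derivWithin (uT t ht)]),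
        ic (fun s => ∫ r in (-τ)..(0:ℝ),
            derivWithin (fun u => E₂ u (-τ - s) (-τ - r)) (Icc 0 T) t * w s * w r)
          (fun s => ∫ r in (-τ)..(0:ℝ), L2 (t, q s, q r) (1, 0, 0) * w s * w r)
          (fun s hs => ic _ _ (fun r hr => by
            simp only [hqe s hs, hqe r hr,
              (d2t _ (refl s hs) _ (refl r hr)).derivWithin (uT t ht)])),
        ic (fun s => (E₁ t (-τ - s) + E₂ t (-τ - s) 0) * w s)
          (fun s => (E₁ t (q s) + E₂ t (q s) 0) * w s)
          (fun s hs => by simp only [hqe s hs]),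
        ic (fun s => w s *
            derivWithin (fun s' => 2 * x * E₁ t (-τ - s')
              - 2 * ∫ r in (-τ)..(0:ℝ), E₂ t (-τ - s') (-τ - r) * w r)
              (Icc (-τ) 0) s)
          (fun s => w s * (2 * x * (-(L1 (t, q s) (0, 1)))
            - 2 * ∫ r in (-τ)..(0:ℝ), (-(L2 (t, q s, q r) (0, 1, 0))) * w r))
          (fun s hs => by
            have hd := ct_diff hτ0 (fun x r => E₂ t (-τ - x) (-τ - r))
              (fun s r => -(L2 (t, q s, q r) (0, 1, 0))) w hw cD
              (fun s hs r hr => by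
                simp only [hqe s hs, hqe r hr]
                exact d2s' s hs r hr)
              (hE₂.continuousOn.comp (f := fun r : ℝ => (t, -τ - -τ, -τ - r)) (by fun_prop)
                (fun r hr => ⟨ht, refl _ ⟨le_rfl, hτ0.le⟩, refl r hr⟩)) s hs
            have hd2 := ((d1s' s hs).const_mul (2 * x)).fun_sub (hd.const_mul 2)
            simp only [hd2.derivWithin (uI s hs), hqe s hs])] at h1
      linear_combination h1)
  have rr : ∀ s ∈ Icc (-τ) (0:ℝ), q (-τ - s) = s := by
    intro s hs
    rw [hqe _ (refl s hs)]; ring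
  refine ⟨r1, ?_, ?_, r4⟩
  · intro s hs
    have := r2 _ (refl s hs)
    simp only [rr s hs] at this
    rw [(d1t s hs).derivWithin (uT t ht), (d1s s hs).derivWithin (uI s hs)]
    linear_combination this
  · intro s hs r hr
    have := r3 _ (refl s hs) _ (refl r hr)
    simp only [rr s hs, rr r hr] at this
    rw [(d2t s hs r hr).derivWithin (uT t ht), (d2s s hs r hr).derivWithin (uI s hs),
      (d2r s hs r hr).derivWithin (uI r hr)]
    linear_combination this

/- STATEMENT 6: the converse 'collecting terms' step. If the quadratic-ansatz identity
holds for all t ∈ [0,T], a ∈ ℝ and continuous w : [−τ,0] → ℝ, then the coefficients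
must vanish, i.e. (E₀,E₁,E₂,E₃) satisfies the four equations of the MFG Riccati system
at every point of the domain. -/
theorem collecting_terms (T τ σ ε : ℝ)
    (hT : 0 < T) (hτ : 0 < τ) (hτT : τ ≤ T) (hσ : 0 < σ) (hε : 0 < ε)
    (E₀ : ℝ → ℝ) (E₁ : ℝ → ℝ → ℝ) (E₂ : ℝ → ℝ → ℝ → ℝ) (E₃ : ℝ → ℝ)
    (hE₀ : ContDiffOn ℝ 1 E₀ (Icc 0 T))
    (hE₁ : ContDiffOn ℝ 1 (fun p : ℝ × ℝ => E₁ p.1 p.2) (Icc 0 T ×ˢ Icc (-τ) 0))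
    (hE₂ : ContDiffOn ℝ 1 (fun p : ℝ × ℝ × ℝ => E₂ p.1 p.2.1 p.2.2)
      (Icc 0 T ×ˢ Icc (-τ) 0 ×ˢ Icc (-τ) 0))
    (hE₃ : ContDiffOn ℝ 1 E₃ (Icc 0 T))
    (hsym : ∀ t ∈ Icc (0:ℝ) T, ∀ s ∈ Icc (-τ) (0:ℝ), ∀ r ∈ Icc (-τ) (0:ℝ),
      E₂ t s r = E₂ t r s)
    (hid : ∀ t ∈ Icc (0:ℝ) T, ∀ a : ℝ, ∀ w : ℝ → ℝ, ContinuousOn w (Icc (-τ) 0) →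
      derivWithin E₀ (Icc 0 T) t * a^2
        - 2 * a * (∫ s in (-τ)..(0:ℝ),
            derivWithin (fun u => E₁ u (-τ - s)) (Icc 0 T) t * w s)
        + (∫ s in (-τ)..(0:ℝ), ∫ r in (-τ)..(0:ℝ),
            derivWithin (fun u => E₂ u (-τ - s) (-τ - r)) (Icc 0 T) t * w s * w r)
        + derivWithin E₃ (Icc 0 T) t + σ^2 * E₀ t
        - (∫ s in (-τ)..(0:ℝ), w s *
            derivWithin (fun s' => 2 * a * E₁ t (-τ - s')
              - 2 * ∫ r in (-τ)..(0:ℝ), E₂ t (-τ - s') (-τ - r) * w r)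
              (Icc (-τ) 0) s)
        - 2 * ((E₀ t + E₁ t 0) * a
            - ∫ s in (-τ)..(0:ℝ), (E₁ t (-τ - s) + E₂ t (-τ - s) 0) * w s)^2
        + ε/2 * a^2 = 0) :
    (∀ t ∈ Icc (0:ℝ) T,
      derivWithin E₀ (Icc 0 T) t - 2 * (E₀ t + E₁ t 0)^2 + ε/2 = 0) ∧
    (∀ t ∈ Icc (0:ℝ) T, ∀ s ∈ Icc (-τ) (0:ℝ),
      derivWithin (fun u => E₁ u s) (Icc 0 T) t
        - derivWithin (fun v => E₁ t v) (Icc (-τ) 0) s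
        - 2 * (E₀ t + E₁ t 0) * (E₁ t s + E₂ t s 0) = 0) ∧
    (∀ t ∈ Icc (0:ℝ) T, ∀ s ∈ Icc (-τ) (0:ℝ), ∀ r ∈ Icc (-τ) (0:ℝ),
      derivWithin (fun u => E₂ u s r) (Icc 0 T) t
        - derivWithin (fun v => E₂ t v r) (Icc (-τ) 0) s
        - derivWithin (fun v => E₂ t s v) (Icc (-τ) 0) r
        - 2 * (E₁ t s + E₂ t s 0) * (E₁ t r + E₂ t r 0) = 0) ∧
    (∀ t ∈ Icc (0:ℝ) T,
      derivWithin E₃ (Icc 0 T) t + σ^2 * E₀ t = 0) := by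
  have H := fun t ht => ct_fixed T τ σ ε hT hτ E₀ E₁ E₂ E₃ hE₁ hE₂ hsym t ht (hid t ht)
  exact ⟨fun t ht => (H t ht).1, fun t ht => (H t ht).2.1, fun t ht => (H t ht).2.2.1,
    fun t ht => (H t ht).2.2.2⟩
end

section
/- Let N ≥ 2 be an integer. Let E₀, E₃ be C¹ on [0,T], E₁ be C¹ on [0,T]×[−τ,0], E₂ be C¹ on [0,T]×[−τ,0]² with E₂(t,s,r) = E₂(t,r,s), and suppose (E₀,E₁,E₂,E₃) satisfies equations (i)–(iv) of the N-player Riccati system (the boundary conditions at t = T and s = −τ are not needed). Then for every t ∈ [0,T], every a ∈ ℝ and every continuous w : [−τ,0] → ℝ: E₀'(t)·a² − 2a·∫_{−τ}^0 ∂ₜE₁(t,−τ−s)w(s)ds + ∫_{−τ}^0∫_{−τ}^0 ∂ₜE₂(t,−τ−s,−τ−r)w(s)w(r)ds dr + E₃'(t) + (1−1/N)σ²E₀(t) − ∫_{−τ}^0 w(s)·(d/ds)[2aE₁(t,−τ−s) − 2∫_{−τ}^0 E₂(t,−τ−s,−τ−r)w(r)dr] ds + 2(1/N²−1)[(E₀(t)+E₁(t,0))a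 − ∫_{−τ}^0 (E₁(t,−τ−s)+E₂(t,−τ−s,0))w(s)ds]² + (ε/2)a² = 0. (With a = z̄₀ − z₀^i and w = z̄₁ − z₁^i, this is the verification that the quadratic ansatz V^i solves the N-player Nash HJB system.) -/
open Set

/-- The N-player Riccati system (i)–(iv) on [0,T]×[−τ,0], with one-sided (within-set)
derivatives at the boundary, together with the C¹ regularity. -/
def IsNPlayerRiccati (T τ σ ε : ℝ) (N : ℕ) (E₀ : ℝ → ℝ) (E₁ : ℝ → ℝ → ℝ)
    (E₂ : ℝ → ℝ → ℝ → ℝ) (E₃ : ℝ → ℝ) : Prop :=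
  ContDiffOn ℝ 1 E₀ (Icc 0 T) ∧
  ContDiffOn ℝ 1 (fun p : ℝ × ℝ => E₁ p.1 p.2) (Icc 0 T ×ˢ Icc (-τ) 0) ∧
  ContDiffOn ℝ 1 (fun p : ℝ × ℝ × ℝ => E₂ p.1 p.2.1 p.2.2)
    (Icc 0 T ×ˢ Icc (-τ) 0 ×ˢ Icc (-τ) 0) ∧
  ContDiffOn ℝ 1 E₃ (Icc 0 T) ∧
  (∀ t ∈ Icc (0:ℝ) T,
    derivWithin E₀ (Icc 0 T) t
      + 2 * (1/(N:ℝ)^2 - 1) * (E₀ t + E₁ t 0)^2 + ε/2 = 0) ∧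
  (∀ t ∈ Icc (0:ℝ) T, ∀ s ∈ Icc (-τ) (0:ℝ),
    derivWithin (fun u => E₁ u s) (Icc 0 T) t
      - derivWithin (fun v => E₁ t v) (Icc (-τ) 0) s
      + 2 * (1/(N:ℝ)^2 - 1) * (E₀ t + E₁ t 0) * (E₁ t s + E₂ t s 0) = 0) ∧
  (∀ t ∈ Icc (0:ℝ) T, ∀ s ∈ Icc (-τ) (0:ℝ), ∀ r ∈ Icc (-τ) (0:ℝ),
    derivWithin (fun u => E₂ u s r) (Icc 0 T) t
      - derivWithin (fun v => E₂ t v r) (Icc (-τ) 0) s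
      - derivWithin (fun v => E₂ t s v) (Icc (-τ) 0) r
      + 2 * (1/(N:ℝ)^2 - 1) * (E₁ t s + E₂ t s 0) * (E₁ t r + E₂ t r 0) = 0) ∧
  (∀ t ∈ Icc (0:ℝ) T,
    derivWithin E₃ (Icc 0 T) t + (1 - 1/(N:ℝ)) * σ^2 * E₀ t = 0)

open MeasureTheory in
lemma aux_swap {F : ℝ → ℝ → ℝ} (hF : Continuous (fun p : ℝ × ℝ => F p.1 p.2)) (a b c d : ℝ) :
    (∫ x in a..b, ∫ y in c..d, F x y) = ∫ y in c..d, ∫ x in a..b, F x y := by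
  apply intervalIntegral_intervalIntegral_swap
  have h : IntegrableOn (fun p : ℝ × ℝ => F p.1 p.2) (uIcc a b ×ˢ uIcc c d) :=
    hF.continuousOn.integrableOn_compact (isCompact_uIcc.prod isCompact_uIcc)
  exact h.mono_set (prod_mono uIoc_subset_uIcc uIoc_subset_uIcc)

/-- continuous extension from an interval -/
lemma aux_ext {l u : ℝ} (h : l ≤ u) {f : ℝ → ℝ} (hf : ContinuousOn f (Icc l u)) :
    ∃ d : ℝ → ℝ, Continuous d ∧ ∀ s ∈ Icc l u, d s = f s := by
  refine ⟨fun s => f (projIcc l u h s), ?_, ?_⟩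
  · exact hf.comp_continuous (continuous_subtype_val.comp continuous_projIcc) (fun s => (projIcc l u h s).2)
  · intro s hs
    simp [projIcc_of_mem h hs]

lemma aux_one {l u : ℝ} (h : l < u) {f : ℝ → ℝ} (hf : ContDiffOn ℝ 1 f (Icc l u)) :
    ∃ d : ℝ → ℝ, Continuous d ∧ ∀ s ∈ Icc l u, HasDerivWithinAt f (d s) (Icc l u) s := by
  obtain ⟨d, hd, hd'⟩ := aux_ext h.le
    (hf.continuousOn_derivWithin (uniqueDiffOn_Icc h) le_rfl)
  refine ⟨d, hd, fun s hs => ?_⟩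
  rw [hd' s hs]
  exact ((hf.differentiableOn one_ne_zero) s hs).hasDerivWithinAt

lemma aux_two {l u : ℝ} (h : l < u) {g : ℝ → ℝ → ℝ}
    (hg : ContDiffOn ℝ 1 (fun p : ℝ × ℝ => g p.1 p.2) (Icc l u ×ˢ Icc l u)) :
    ∃ d : ℝ → ℝ → ℝ, Continuous (fun p : ℝ × ℝ => d p.1 p.2) ∧
      ∀ s ∈ Icc l u, ∀ r ∈ Icc l u, HasDerivWithinAt (fun v => g v r) (d s r) (Icc l u) s := by
  have hU : UniqueDiffOn ℝ (Icc l u ×ˢ Icc l u) :=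
    (uniqueDiffOn_Icc h).prod (uniqueDiffOn_Icc h)
  have hc := hg.continuousOn_fderivWithin hU le_rfl
  have hpc : Continuous (fun s : ℝ => (projIcc l u h.le s : ℝ)) :=
    continuous_subtype_val.comp continuous_projIcc
  refine ⟨fun s r => fderivWithin ℝ (fun p : ℝ × ℝ => g p.1 p.2) (Icc l u ×ˢ Icc l u)
    ((projIcc l u h.le s : ℝ), (projIcc l u h.le r : ℝ)) (1, 0), ?_, ?_⟩
  · refine Continuous.clm_apply ?_ continuous_const
    exact hc.comp_continuous (f := fun p : ℝ × ℝ => ((projIcc l u h.le p.1 : ℝ), (projIcc l u h.le p.2 : ℝ)))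
      ((hpc.comp continuous_fst).prodMk (hpc.comp continuous_snd))
      (fun p => ⟨(projIcc l u h.le p.1).2, (projIcc l u h.le p.2).2⟩)
  · intro s hs r hr
    simp only [projIcc_of_mem h.le hs, projIcc_of_mem h.le hr]
    have h1 := ((hg.differentiableOn one_ne_zero) (s, r) ⟨hs, hr⟩).hasFDerivWithinAt
    have h2 : HasDerivWithinAt (fun v : ℝ => (v, r)) ((1 : ℝ), (0 : ℝ)) (Icc l u) s :=
      (hasDerivWithinAt_id s _).prodMk (hasDerivWithinAt_const s _ r)
    have h3 : MapsTo (fun v : ℝ => (v, r)) (Icc l u) (Icc l u ×ˢ Icc l u) := fun v hv => ⟨hv, hr⟩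
    exact h1.comp_hasDerivWithinAt s h2 h3

open MeasureTheory in
lemma aux_param {l u : ℝ} (h : l < u) {g d : ℝ → ℝ → ℝ} {w : ℝ → ℝ}
    (hg : ContinuousOn (fun p : ℝ × ℝ => g p.1 p.2) (Icc l u ×ˢ Icc l u))
    (hd : Continuous (fun p : ℝ × ℝ => d p.1 p.2)) (hw : Continuous w)
    (hD : ∀ s ∈ Icc l u, ∀ r ∈ Icc l u,
      HasDerivWithinAt (fun v => g v r) (d s r) (Icc l u) s) :
    ∀ s ∈ Icc l u, HasDerivWithinAt (fun v => ∫ r in l..u, g v r * w r)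
      (∫ r in l..u, d s r * w r) (Icc l u) s := by
  have hdw : Continuous (fun p : ℝ × ℝ => d p.1 p.2 * w p.2) := hd.mul (hw.comp continuous_snd)
  have hH : Continuous (fun v => ∫ r in l..u, d v r * w r) :=
    intervalIntegral.continuous_parametric_intervalIntegral_of_continuous' (f := fun v r => d v r * w r) hdw l u
  have hgi : ∀ s ∈ Icc l u, IntervalIntegrable (fun r => g s r * w r) volume l u := by
    intro s hs
    apply ContinuousOn.intervalIntegrable
    rw [uIcc_of_le h.le]
    refine ContinuousOn.mul ?_ hw.continuousOn
    exact hg.comp (f := fun r : ℝ => (s, r)) (by fun_prop) (fun r hr => ⟨hs, hr⟩)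
  have hl : l ∈ Icc l u := ⟨le_rfl, h.le⟩
  have key : ∀ s ∈ Icc l u, (∫ r in l..u, g s r * w r) =
      (∫ r in l..u, g l r * w r) + ∫ v in l..s, ∫ r in l..u, d v r * w r := by
    intro s hs
    have hsw : (∫ v in l..s, ∫ r in l..u, d v r * w r) =
        ∫ r in l..u, ∫ v in l..s, d v r * w r := by
      exact aux_swap (F := fun v r => d v r * w r) hdw l s l u
    rw [hsw, ← sub_eq_iff_eq_add', ← intervalIntegral.integral_sub (hgi s hs) (hgi l hl)]
    apply intervalIntegral.integral_congr
    intro r hr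
    rw [uIcc_of_le h.le] at hr
    simp only [intervalIntegral.integral_mul_const]
    have hdr : Continuous (fun v => d v r) := hd.comp (by fun_prop : Continuous fun v : ℝ => (v, r))
    rw [intervalIntegral.integral_eq_sub_of_hasDerivAt_of_le (f := fun v => g v r) hs.1 ?_ ?_ (hdr.intervalIntegrable _ _)]
    · ring
    · exact hg.comp (f := fun v : ℝ => (v, r)) (by fun_prop)
        (fun v hv => ⟨⟨hv.1, hv.2.trans hs.2⟩, hr⟩)
    · intro v hv
      have hv' : v < u := hv.2.trans_le hs.2
      exact (hD v ⟨hv.1.le, hv'.le⟩ r hr).hasDerivAt (Icc_mem_nhds hv.1 hv')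
  intro s hs
  have := ((hH.integral_hasStrictDerivAt l s).hasDerivAt.hasDerivWithinAt (s := Icc l u)).const_add (∫ r in l..u, g l r * w r)
  exact this.congr key (key s hs)

lemma aux_alg {l u : ℝ} {de B W : ℝ → ℝ} {dg : ℝ → ℝ → ℝ}
    (hde : Continuous de) (hB : Continuous B) (hW : Continuous W)
    (hdg : Continuous (fun p : ℝ × ℝ => dg p.1 p.2)) (a A K : ℝ) :
    - 2 * a * (∫ s in l..u, (-de s - K * A * B s) * W s)
      + (∫ s in l..u, ∫ r in l..u, (-dg s r - dg r s - K * B s * B r) * W s * W r)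
      - (∫ s in l..u, W s * (2 * a * de s - 2 * ∫ r in l..u, dg s r * W r))
      + K * (A * a - ∫ s in l..u, B s * W s) ^ 2 = K * A ^ 2 * a ^ 2 := by
  have hP : Continuous (fun s => ∫ r in l..u, dg s r * W r) :=
    intervalIntegral.continuous_parametric_intervalIntegral_of_continuous' (f := fun s r => dg s r * W r)
      (hdg.mul (hW.comp continuous_snd)) l u
  have hQ : Continuous (fun s => ∫ r in l..u, dg r s * W r) :=
    intervalIntegral.continuous_parametric_intervalIntegral_of_continuous' (f := fun s r => dg r s * W r)
      ((hdg.comp continuous_swap).mul (hW.comp continuous_snd)) l u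
  have e1 : (∫ s in l..u, (-de s - K * A * B s) * W s)
      = -(∫ s in l..u, de s * W s) - K * A * ∫ s in l..u, B s * W s := by
    rw [← intervalIntegral.integral_const_mul, ← intervalIntegral.integral_neg,
      ← intervalIntegral.integral_sub]
    · congr 1; ext s; ring
    all_goals apply Continuous.intervalIntegrable; fun_prop
  have e3 : (∫ s in l..u, W s * (2 * a * de s - 2 * ∫ r in l..u, dg s r * W r))
      = 2 * a * (∫ s in l..u, de s * W s) - 2 * ∫ s in l..u, W s * ∫ r in l..u, dg s r * W r := by
    rw [← intervalIntegral.integral_const_mul, ← intervalIntegral.integral_const_mul,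
      ← intervalIntegral.integral_sub]
    · congr 1; ext s; ring
    all_goals apply Continuous.intervalIntegrable; fun_prop
  have hsw : (∫ s in l..u, W s * ∫ r in l..u, dg r s * W r)
      = ∫ s in l..u, W s * ∫ r in l..u, dg s r * W r := by
    simp only [← intervalIntegral.integral_const_mul]
    rw [aux_swap (F := fun s r => W s * (dg r s * W r))]
    · congr 1; ext s; congr 1; ext r; ring
    · exact (hW.comp continuous_fst).mul ((hdg.comp continuous_swap).mul (hW.comp continuous_snd))
  have e2i : ∀ s, (∫ r in l..u, (-dg s r - dg r s - K * B s * B r) * W s * W r)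
      = -(W s * ∫ r in l..u, dg s r * W r) - (W s * ∫ r in l..u, dg r s * W r)
        - (K * ∫ r in l..u, B r * W r) * (B s * W s) := by
    intro s
    have h1 : Continuous (fun r => dg s r) := hdg.comp (by fun_prop : Continuous fun r : ℝ => (s, r))
    have h2 : Continuous (fun r => dg r s) := hdg.comp (by fun_prop : Continuous fun r : ℝ => (r, s))
    have : (K * ∫ r in l..u, B r * W r) * (B s * W s) = (K * B s * W s) * ∫ r in l..u, B r * W r := by ring
    rw [this, ← intervalIntegral.integral_const_mul, ← intervalIntegral.integral_const_mul,
      ← intervalIntegral.integral_const_mul, ← intervalIntegral.integral_neg,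
      ← intervalIntegral.integral_sub, ← intervalIntegral.integral_sub]
    · congr 1; ext r; ring
    all_goals apply Continuous.intervalIntegrable; fun_prop
  have e2 : (∫ s in l..u, ∫ r in l..u, (-dg s r - dg r s - K * B s * B r) * W s * W r)
      = -2 * (∫ s in l..u, W s * ∫ r in l..u, dg s r * W r) - K * (∫ s in l..u, B s * W s) ^ 2 := by
    simp only [e2i]
    rw [intervalIntegral.integral_sub, intervalIntegral.integral_sub, intervalIntegral.integral_neg,
      intervalIntegral.integral_const_mul, hsw]
    · ring
    all_goals apply Continuous.intervalIntegrable; fun_prop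
  rw [e1, e2, e3]
  ring

/- STATEMENT 7: a C¹ symmetric solution of the N-player Riccati system (i)–(iv) makes
the quadratic ansatz V^i solve the N-player Nash HJB system: the collected-terms
identity holds for every t ∈ [0,T], a ∈ ℝ and continuous w : [−τ,0] → ℝ. -/
theorem nplayer_ansatz_verification (T τ σ ε : ℝ)
    (hT : 0 < T) (hτ : 0 < τ) (hτT : τ ≤ T) (hσ : 0 < σ) (hε : 0 < ε)
    (N : ℕ) (hN : 2 ≤ N)
    (E₀ : ℝ → ℝ) (E₁ : ℝ → ℝ → ℝ) (E₂ : ℝ → ℝ → ℝ → ℝ) (E₃ : ℝ → ℝ)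
    (hRic : IsNPlayerRiccati T τ σ ε N E₀ E₁ E₂ E₃)
    (hsym : ∀ t ∈ Icc (0:ℝ) T, ∀ s ∈ Icc (-τ) (0:ℝ), ∀ r ∈ Icc (-τ) (0:ℝ),
      E₂ t s r = E₂ t r s) :
    ∀ t ∈ Icc (0:ℝ) T, ∀ a : ℝ, ∀ w : ℝ → ℝ, ContinuousOn w (Icc (-τ) 0) →
      derivWithin E₀ (Icc 0 T) t * a^2
        - 2 * a * (∫ s in (-τ)..(0:ℝ),
            derivWithin (fun u => E₁ u (-τ - s)) (Icc 0 T) t * w s)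
        + (∫ s in (-τ)..(0:ℝ), ∫ r in (-τ)..(0:ℝ),
            derivWithin (fun u => E₂ u (-τ - s) (-τ - r)) (Icc 0 T) t * w s * w r)
        + derivWithin E₃ (Icc 0 T) t + (1 - 1/(N:ℝ)) * σ^2 * E₀ t
        - (∫ s in (-τ)..(0:ℝ), w s *
            derivWithin (fun s' => 2 * a * E₁ t (-τ - s')
              - 2 * ∫ r in (-τ)..(0:ℝ), E₂ t (-τ - s') (-τ - r) * w r)
              (Icc (-τ) 0) s)
        + 2 * (1/(N:ℝ)^2 - 1) * ((E₀ t + E₁ t 0) * a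
            - ∫ s in (-τ)..(0:ℝ), (E₁ t (-τ - s) + E₂ t (-τ - s) 0) * w s)^2
        + ε/2 * a^2 = 0 := by
  intro t ht a w hw
  obtain ⟨-, c1, c2, -, h0, h1, h2, h3⟩ := hRic
  have hl : -τ < 0 := by linarith
  have hrefl : ∀ s ∈ Icc (-τ) (0:ℝ), -τ - s ∈ Icc (-τ) (0:ℝ) := by
    intro s hs; constructor <;> linarith [hs.1, hs.2]
  have hU := uniqueDiffOn_Icc hl
  -- reflected kernels
  have ce : ContDiffOn ℝ 1 (fun s => E₁ t (-τ - s)) (Icc (-τ) 0) :=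
    c1.comp (f := fun s : ℝ => (t, -τ - s)) (by fun_prop) (fun s hs => ⟨ht, hrefl s hs⟩)
  have cg : ContDiffOn ℝ 1 (fun p : ℝ × ℝ => E₂ t (-τ - p.1) (-τ - p.2))
      (Icc (-τ) 0 ×ˢ Icc (-τ) 0) :=
    c2.comp (f := fun p : ℝ × ℝ => (t, -τ - p.1, -τ - p.2)) (by fun_prop)
      (fun p hp => ⟨ht, hrefl _ hp.1, hrefl _ hp.2⟩)
  have cB : ContinuousOn (fun s => E₁ t (-τ - s) + E₂ t (-τ - s) 0) (Icc (-τ) 0) := by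
    refine ce.continuousOn.add ?_
    exact c2.continuousOn.comp (f := fun s : ℝ => (t, -τ - s, (0:ℝ))) (by fun_prop)
      (fun s hs => ⟨ht, hrefl _ hs, hl.le, le_rfl⟩)
  obtain ⟨W, hW, hWe⟩ := aux_ext hl.le hw
  obtain ⟨B, hB, hBe⟩ := aux_ext hl.le cB
  obtain ⟨de, hde, hdeD⟩ := aux_one hl ce
  obtain ⟨dg, hdg, hdgD⟩ := aux_two (g := fun s r => E₂ t (-τ - s) (-τ - r)) hl cg
  have hpar := aux_param hl cg.continuousOn hdg hW hdgD
  -- undoing the reflection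
  have unrefl : ∀ (f : ℝ → ℝ) (m s : ℝ), s ∈ Icc (-τ) (0:ℝ) →
      HasDerivWithinAt (fun v => f (-τ - v)) m (Icc (-τ) 0) s →
      derivWithin f (Icc (-τ) 0) (-τ - s) = -m := by
    intro f m s hs hf
    have hi : HasDerivWithinAt (fun v : ℝ => -τ - v) (-1) (Icc (-τ) 0) (-τ - s) :=
      (hasDerivWithinAt_id _ _).const_sub _
    have hs' : -τ - (-τ - s) = s := by ring
    have hf' : HasDerivWithinAt (fun v => f (-τ - v)) m (Icc (-τ) 0) (-τ - (-τ - s)) := by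
      rwa [hs']
    have := HasDerivWithinAt.comp (-τ - s) hf' hi (fun v hv => hrefl v hv)
    have h5 : HasDerivWithinAt f (m * -1) (Icc (-τ) 0) (-τ - s) := by
      refine this.congr_of_mem (fun v hv => ?_) (hrefl s hs)
      simp
    rw [h5.derivWithin (hU _ (hrefl s hs))]; ring
  have hIcc : uIcc (-τ) (0:ℝ) = Icc (-τ) 0 := uIcc_of_le hl.le
  set K : ℝ := 2 * (1/(N:ℝ)^2 - 1) with hK
  set A : ℝ := E₀ t + E₁ t 0 with hA
  have i1 : (∫ s in (-τ)..(0:ℝ), derivWithin (fun u => E₁ u (-τ - s)) (Icc 0 T) t * w s)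
      = ∫ s in (-τ)..(0:ℝ), (-de s - K * A * B s) * W s := by
    apply intervalIntegral.integral_congr
    intro s hs
    rw [hIcc] at hs
    have q := h1 t ht _ (hrefl s hs)
    rw [unrefl (fun v => E₁ t v) _ s hs (hdeD s hs)] at q
    simp only [hWe s hs, hBe s hs]
    congr 1
    linarith
  have i2 : (∫ s in (-τ)..(0:ℝ), ∫ r in (-τ)..(0:ℝ),
            derivWithin (fun u => E₂ u (-τ - s) (-τ - r)) (Icc 0 T) t * w s * w r)
      = ∫ s in (-τ)..(0:ℝ), ∫ r in (-τ)..(0:ℝ),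
          (-dg s r - dg r s - K * B s * B r) * W s * W r := by
    apply intervalIntegral.integral_congr
    intro s hs
    apply intervalIntegral.integral_congr
    intro r hr
    rw [hIcc] at hs hr
    have q := h2 t ht _ (hrefl s hs) _ (hrefl r hr)
    have d2 : HasDerivWithinAt (fun v => E₂ t (-τ - s) (-τ - v)) (dg r s) (Icc (-τ) 0) r :=
      (hdgD r hr s hs).congr_of_mem
        (fun v hv => hsym t ht _ (hrefl s hs) _ (hrefl v hv)) hr
    rw [unrefl (fun v => E₂ t v (-τ - r)) _ s hs (hdgD s hs r hr),
      unrefl (fun v => E₂ t (-τ - s) v) _ r hr d2] at q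
    simp only [hWe s hs, hBe s hs, hWe r hr, hBe r hr]
    congr 2
    linarith
  have i3 : (∫ s in (-τ)..(0:ℝ), w s *
            derivWithin (fun s' => 2 * a * E₁ t (-τ - s')
              - 2 * ∫ r in (-τ)..(0:ℝ), E₂ t (-τ - s') (-τ - r) * w r)
              (Icc (-τ) 0) s)
      = ∫ s in (-τ)..(0:ℝ), W s * (2 * a * de s - 2 * ∫ r in (-τ)..(0:ℝ), dg s r * W r) := by
    have hin : ∀ s', (∫ r in (-τ)..(0:ℝ), E₂ t (-τ - s') (-τ - r) * w r)
        = ∫ r in (-τ)..(0:ℝ), E₂ t (-τ - s') (-τ - r) * W r := by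
      intro s'
      apply intervalIntegral.integral_congr
      intro r hr
      rw [hIcc] at hr
      simp only [hWe r hr]
    simp only [hin]
    apply intervalIntegral.integral_congr
    intro s hs
    rw [hIcc] at hs
    simp only [hWe s hs]
    congr 1
    exact (((hdeD s hs).const_mul (2 * a)).sub ((hpar s hs).const_mul 2)).derivWithin (hU s hs)
  have i4 : (∫ s in (-τ)..(0:ℝ), (E₁ t (-τ - s) + E₂ t (-τ - s) 0) * w s)
      = ∫ s in (-τ)..(0:ℝ), B s * W s := by
    apply intervalIntegral.integral_congr
    intro s hs
    rw [hIcc] at hs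
    simp only [hWe s hs, hBe s hs]
  rw [i1, i2, i3, i4]
  have alg := aux_alg (l := -τ) (u := 0) hde hB hW hdg a A K
  have q0 := h0 t ht
  have q3 := h3 t ht
  linear_combination alg + a ^ 2 * q0 + q3
end
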